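/- Let p = 3, m a positive integer, and q = p^m. Then Σ_{(α,β,γ) ∈ F_q³} S(α,β,γ)⁴ = (8(p^m − 1)² + 1)·p^{3m}. -/

import Mathlib

open Complex Finset

noncomputable def zetaPow (p : ℕ) (a : ZMod p) : ℂ :=
  Complex.exp (2 * Real.pi * Complex.I * (a.val : ℂ) / (p : ℂ))

noncomputable def expSum (p m : ℕ) [Fact p.Prime]
    (α β γ : GaloisField p m) : ℂ :=
  letI : Fintype (GaloisField p m) := Fintype.ofFinite _
  ∑ x : GaloisField p m,
    zetaPow p ((Algebra.trace (ZMod p) (GaloisField p m))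
      (α * x ^ 2 + β * x ^ (p + 1) + γ * x ^ (p ^ 2 + 1)))

noncomputable def nval (p m : ℕ) (ε : ℤ) (j : ℕ) : ℂ :=
  if j % 2 = 0 then (ε : ℂ) * ((Real.sqrt ((p : ℝ) ^ (m + j)) : ℝ) : ℂ)
  else (ε : ℂ) * Complex.I * ((Real.sqrt ((p : ℝ) ^ (m + j)) : ℝ) : ℂ)

noncomputable def nn (p m : ℕ) [Fact p.Prime] (ε : ℤ) (j : ℕ) : ℕ :=
  {t : GaloisField p m × GaloisField p m × GaloisField p m |
    t ≠ (0, 0, 0) ∧ expSum p m t.1 t.2.1 t.2.2 = nval p m ε j}.ncard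

/-!
By orthogonality the fourth moment is `q ^ 3` times the number of `v ∈ F_q⁴` with
`∑ v_j σ^i(v_j) = 0` for `i = 0, 1, 2`, where `σ` is the Frobenius. As `-1` is a sum of two squares
in the prime field, a `σ`-equivariant linear change of variables turns `∑ v_j ^ 2` into the
determinant of a `2 × 2` matrix, and the equations say that the polar form of the determinant
vanishes at `(M, σ^i M)`. For a singular matrix `M = u wᵀ` its value there is
`det (u, σ^i u) * det (w, σ^i w)`: the equation for `i = 1` means that `σ` fixes the line of `u` or
the line of `w`, and then the equations for all other `i` follow. Of the `q + 1` lines in `F_q²`,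
`p + 1` are fixed by `σ`, so there are `1 + (q - 1) ((q + 1) ^ 2 - (q - p) ^ 2)` solutions.
-/

/-- The character `x ↦ ζ_p ^ Tr x` of a `ZMod p`-algebra `F`. -/
noncomputable def traceChar (p : ℕ) [NeZero p] (F : Type*) [CommRing F] [Algebra (ZMod p) F] :
    AddChar F ℂ :=
  ZMod.stdAddChar.compAddMonoidHom (Algebra.trace (ZMod p) F).toAddMonoidHom

theorem traceChar_isPrimitive (p : ℕ) [Fact p.Prime] (F : Type*) [Field F] [Finite F]
    [Algebra (ZMod p) F] : (traceChar p F).IsPrimitive := by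
  refine AddChar.IsPrimitive.of_ne_one fun h => ?_
  obtain ⟨x, hx⟩ := Algebra.trace_surjective (ZMod p) F 1
  have htrace : ZMod.stdAddChar (Algebra.trace (ZMod p) F x) = 1 := DFunLike.congr_fun h x
  rw [hx, ← AddChar.map_zero_eq_one (ZMod.stdAddChar (N := p))] at htrace
  exact one_ne_zero (ZMod.injective_stdAddChar htrace)

theorem zetaPow_eq_stdAddChar (p : ℕ) [NeZero p] (a : ZMod p) :
    zetaPow p a = ZMod.stdAddChar a := by
  rw [ZMod.stdAddChar_apply, ZMod.toCircle_apply, zetaPow]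

theorem expSum_eq_sum_traceChar (p m : ℕ) [Fact p.Prime] [inst : Fintype (GaloisField p m)]
    (α β γ : GaloisField p m) :
    expSum p m α β γ = ∑ x, traceChar p (GaloisField p m)
      (α * x ^ 2 + β * x ^ (p + 1) + γ * x ^ (p ^ 2 + 1)) := by
  obtain rfl := Subsingleton.elim inst (Fintype.ofFinite _)
  simp only [expSum, zetaPow_eq_stdAddChar]
  rfl

theorem sum_prod_prod_eq_sum_fin_three {α M : Type*} [Fintype α] [AddCommMonoid M]
    (g : α → α → α → M) :
    ∑ t : α × α × α, g t.1 t.2.1 t.2.2 = ∑ t : Fin 3 → α, g (t 0) (t 1) (t 2) :=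
  Fintype.sum_bijective (fun t => ![t.1, t.2.1, t.2.2])
    (Function.bijective_iff_has_inverse.2 ⟨fun t => (t 0, t 1, t 2), fun _ => rfl,
      fun _ => List.ofFn_inj.1 rfl⟩) _ _ fun _ => rfl

theorem ringHom_pow_apply_eq_self {A : Type*} [Semiring A] {σ : A →+* A} {x : A} (hx : σ x = x)
    (i : ℕ) : (σ ^ i) x = x := by
  rw [RingHom.coe_pow]
  exact Function.iterate_fixed hx i

section Moments

theorem addChar_map_sum_eq_prod {A M ι : Type*} [AddCommMonoid A] [CommMonoid M] [Fintype ι]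
    (ψ : AddChar A M) (f : ι → A) : ψ (∑ i, f i) = ∏ i, ψ (f i) :=
  (congrArg ψ.toMonoidHom (ofAdd_sum univ f)).trans (map_prod ψ.toMonoidHom _ univ)

variable {F R ι X : Type*} [CommRing F] [Fintype F] [DecidableEq F] [CommRing R] [IsDomain R]
  [Fintype ι] [DecidableEq ι] {ψ : AddChar F R}

theorem sum_addChar_sum_mul (hψ : ψ.IsPrimitive) (A : ι → F) :
    ∑ t : ι → F, ψ (∑ i, t i * A i) =
      if ∀ i, A i = 0 then (Fintype.card F : R) ^ Fintype.card ι else 0 :=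
  calc ∑ t : ι → F, ψ (∑ i, t i * A i)
      = ∏ i, ∑ x, ψ (x * A i) := by simp_rw [addChar_map_sum_eq_prod, Fintype.prod_sum]
    _ = _ := by
      simp_rw [AddChar.sum_mulShift _ hψ, Nat.cast_ite, Nat.cast_zero, Fintype.prod_ite_zero,
        prod_const, card_univ]

theorem sum_sum_addChar_pow [Fintype X] (hψ : ψ.IsPrimitive) (f : ι → X → F) (n : ℕ) :
    ∑ t : ι → F, (∑ x, ψ (∑ i, t i * f i x)) ^ n =
      (Fintype.card F : R) ^ Fintype.card ι * #{v : Fin n → X | ∀ i, ∑ j, f i (v j) = 0} := by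
  have expand (t : ι → F) : (∑ x, ψ (∑ i, t i * f i x)) ^ n =
      ∑ v : Fin n → X, ψ (∑ i, t i * ∑ j, f i (v j)) := by
    simp_rw [Fintype.sum_pow, ← addChar_map_sum_eq_prod, mul_sum]
    exact sum_congr rfl fun v _ => congrArg ψ sum_comm
  simp_rw [expand]
  rw [sum_comm]
  simp_rw [sum_addChar_sum_mul hψ]
  rw [← sum_filter, sum_const, nsmul_eq_mul, mul_comm]

end Moments

section ConjPolarDet

variable {R : Type*} [CommRing R] (σ : R →+* R)

/-- The polar form of the determinant of `2 × 2` matrices, evaluated at `M` and its conjugate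
under `σ`. For `σ = 1` this is `2 * det M`. -/
def conjPolarDet (M : Matrix (Fin 2) (Fin 2) R) : R :=
  QuadraticMap.polar Matrix.det M (M.map σ)

theorem conjPolarDet_eq (M : Matrix (Fin 2) (Fin 2) R) :
    conjPolarDet σ M =
      M 0 0 * σ (M 1 1) + M 1 1 * σ (M 0 0) - M 0 1 * σ (M 1 0) - M 1 0 * σ (M 0 1) := by
  simp only [conjPolarDet, QuadraticMap.polar, Matrix.det_fin_two, Matrix.add_apply,
    Matrix.map_apply]
  ring

theorem conjPolarDet_one (M : Matrix (Fin 2) (Fin 2) R) : conjPolarDet 1 M = 2 * M.det := by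
  simp only [conjPolarDet_eq, RingHom.one_def, RingHom.id_apply, Matrix.det_fin_two]
  ring

/-- The matrix of rank at most one with corner entry `a`, rows proportional to `(1, x)` and columns
proportional to `(1, y)`. For `a ≠ 0` these are the singular matrices with nonzero corner entry. -/
def rankOne (a x y : R) : Matrix (Fin 2) (Fin 2) R :=
  !![a, a * x; a * y, a * x * y]

theorem conjPolarDet_rankOne (a x y : R) :
    conjPolarDet σ (rankOne a x y) = a * σ a * ((σ x - x) * (σ y - y)) := by
  rw [conjPolarDet_eq]
  change a * σ (a * x * y) + a * x * y * σ a - a * x * σ (a * y) - a * y * σ (a * x) = _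
  simp only [map_mul]
  ring

theorem det_rankOne (a x y : R) : (rankOne a x y).det = 0 := by
  rw [rankOne, Matrix.det_fin_two_of]
  ring

variable {F : Type*} [Field F] {σ : F →+* F} {M : Matrix (Fin 2) (Fin 2) F}

theorem rankOne_eq_of_det_eq_zero (hdet : M.det = 0) (h : M 0 0 ≠ 0) :
    rankOne (M 0 0) (M 0 1 / M 0 0) (M 1 0 / M 0 0) = M := by
  rw [Matrix.det_fin_two, sub_eq_zero] at hdet
  rw [rankOne, mul_div_cancel₀ _ h, mul_div_cancel₀ _ h, ← mul_div_assoc, ← hdet,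
    mul_div_cancel_left₀ _ h]
  exact M.eta_fin_two.symm

theorem conjPolarDet_eq_zero_of_apply_eq_zero (hdet : M.det = 0) (h : M 0 0 = 0) :
    conjPolarDet σ M = 0 := by
  rw [Matrix.det_fin_two, h, zero_mul, zero_sub, neg_eq_zero, mul_eq_zero] at hdet
  rcases hdet with h' | h' <;> simp [conjPolarDet_eq, h, h']

theorem conjPolarDet_pow_eq_zero (hdet : M.det = 0) (hσ : conjPolarDet σ M = 0) (i : ℕ) :
    conjPolarDet (σ ^ i) M = 0 := by
  by_cases h : M 0 0 = 0
  · exact conjPolarDet_eq_zero_of_apply_eq_zero hdet h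
  rw [← rankOne_eq_of_det_eq_zero hdet h, conjPolarDet_rankOne] at hσ ⊢
  simp only [mul_eq_zero, map_eq_zero, h, false_or, sub_eq_zero] at hσ ⊢
  exact hσ.imp (ringHom_pow_apply_eq_self · i) (ringHom_pow_apply_eq_self · i)

end ConjPolarDet

section FourSquares

variable {F : Type*} [Field F]

/-- Coordinates on the `2 × 2` matrices in which the determinant is the sum of four squares. With
`a = s * v 2 + t * v 3` and `b = t * v 2 - s * v 3` we have `v 2 ^ 2 + v 3 ^ 2 = -(a ^ 2 + b ^ 2)`,
so the sum is `(v 0 ^ 2 - a ^ 2) - (b ^ 2 - v 1 ^ 2)`, where both differences factor. -/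
def fourSquaresEquiv (h2 : (2 : F) ≠ 0) {s t : F} (hst : s ^ 2 + t ^ 2 = -1) :
    (Fin 4 → F) ≃ Matrix (Fin 2) (Fin 2) F where
  toFun v := !![v 0 - (s * v 2 + t * v 3), t * v 2 - s * v 3 - v 1;
    t * v 2 - s * v 3 + v 1, v 0 + (s * v 2 + t * v 3)]
  invFun M := ![(M 0 0 + M 1 1) / 2, (M 1 0 - M 0 1) / 2,
    (s * (M 0 0 - M 1 1) - t * (M 0 1 + M 1 0)) / 2,
    (t * (M 0 0 - M 1 1) + s * (M 0 1 + M 1 0)) / 2]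
  left_inv v := by
    ext i
    fin_cases i <;>
      simp only [Matrix.of_apply, Matrix.cons_val, Fin.zero_eta, Fin.mk_one, Fin.reduceFinMk] <;>
      field_simp
    · ring
    · ring
    · linear_combination -2 * v 2 * hst
    · linear_combination -2 * v 3 * hst
  right_inv M := by
    ext i j
    fin_cases i <;> fin_cases j <;>
      simp only [Matrix.of_apply, Matrix.cons_val, Fin.zero_eta, Fin.mk_one] <;>
      field_simp
    · linear_combination -(M 0 0 - M 1 1) * hst
    · linear_combination -(M 0 1 + M 1 0) * hst
    · linear_combination -(M 0 1 + M 1 0) * hst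
    · linear_combination (M 0 0 - M 1 1) * hst

theorem conjPolarDet_fourSquaresEquiv (h2 : (2 : F) ≠ 0) {s t : F} (hst : s ^ 2 + t ^ 2 = -1)
    {σ : F →+* F} (hs : σ s = s) (ht : σ t = t) (v : Fin 4 → F) :
    conjPolarDet σ (fourSquaresEquiv h2 hst v) = 2 * ∑ j, v j * σ (v j) := by
  simp only [conjPolarDet_eq, fourSquaresEquiv, Equiv.coe_fn_mk, Matrix.of_apply, Matrix.cons_val,
    map_add, map_sub, map_mul, hs, ht, Fin.sum_univ_four]
  linear_combination -2 * (v 2 * σ (v 2) + v 3 * σ (v 3)) * hst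

theorem forall_sum_mul_iterate_eq_zero_iff (h2 : (2 : F) ≠ 0) {s t : F} (hst : s ^ 2 + t ^ 2 = -1)
    {σ : F →+* F} (hs : σ s = s) (ht : σ t = t) {n : ℕ} (hn : 2 ≤ n) (v : Fin 4 → F) :
    (∀ i : Fin n, ∑ j, v j * σ^[i] (v j) = 0) ↔
      (fourSquaresEquiv h2 hst v).det = 0 ∧ conjPolarDet σ (fourSquaresEquiv h2 hst v) = 0 := by
  have sum_eq_zero_iff (i : ℕ) : ∑ j, v j * σ^[i] (v j) = 0 ↔
      conjPolarDet (σ ^ i) (fourSquaresEquiv h2 hst v) = 0 := by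
    rw [← RingHom.coe_pow, conjPolarDet_fourSquaresEquiv h2 hst (ringHom_pow_apply_eq_self hs i)
      (ringHom_pow_apply_eq_self ht i), mul_eq_zero, or_iff_right h2]
  simp_rw [sum_eq_zero_iff]
  constructor
  · intro h
    have hdet : conjPolarDet (σ ^ 0) (fourSquaresEquiv h2 hst v) = 0 := h ⟨0, by lia⟩
    have hσ : conjPolarDet (σ ^ 1) (fourSquaresEquiv h2 hst v) = 0 := h ⟨1, by lia⟩
    rw [pow_zero, conjPolarDet_one, mul_eq_zero, or_iff_right h2] at hdet
    rw [pow_one] at hσ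
    exact ⟨hdet, hσ⟩
  · rintro ⟨hdet, hσ⟩ i
    exact conjPolarDet_pow_eq_zero hdet hσ i

end FourSquares

section Count

theorem card_filter_fst_or_snd {α : Type*} [Fintype α] (P : α → Prop) [DecidablePred P] :
    (#{x : α × α | P x.1 ∨ P x.2} : ℤ) =
      (Fintype.card α : ℤ) ^ 2 - ((Fintype.card α : ℤ) - #{x | P x}) ^ 2 := by
  classical
  have compl : ({x : α × α | P x.1 ∨ P x.2} : Finset (α × α)) =
      (({x | P x} : Finset α)ᶜ ×ˢ ({x | P x} : Finset α)ᶜ)ᶜ := by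
    ext x
    simp only [mem_filter_univ, mem_compl, mem_product]
    tauto
  rw [compl, card_compl, Nat.cast_sub (card_le_univ _), card_product, card_compl, Nat.cast_mul,
    Nat.cast_sub (card_le_univ _), Fintype.card_prod]
  push_cast
  ring

variable {F : Type*} [Field F] [Fintype F] [DecidableEq F] (σ : F →+* F)

theorem card_det_conjPolarDet_of_apply_eq_zero :
    #{M : Matrix (Fin 2) (Fin 2) F | (M.det = 0 ∧ conjPolarDet σ M = 0) ∧ M 0 0 = 0} =
      #{x : F × F | x.1 = 0 ∨ x.2 = 0} * Fintype.card F := by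
  rw [← card_univ (α := F), ← card_product]
  refine card_nbij' (fun M => ((M 0 1, M 1 0), M 1 1)) (fun x => !![0, x.1.1; x.1.2, x.2])
    ?_ ?_ ?_ ?_
  · intro M hM
    simp only [coe_filter, mem_univ, true_and, Set.mem_ofPred_eq] at hM
    obtain ⟨⟨hdet, -⟩, h⟩ := hM
    simpa [Matrix.det_fin_two, h] using hdet
  · intro x hx
    have hdet : !![0, x.1.1; x.1.2, x.2].det = 0 := by
      simpa using hx
    simp [hdet, conjPolarDet_eq_zero_of_apply_eq_zero hdet rfl]
  · intro M hM
    have h : M 0 0 = 0 := by simp_all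
    simp [← h, ← M.eta_fin_two]
  · intro x _
    rfl

theorem card_det_conjPolarDet_of_apply_ne_zero :
    #{M : Matrix (Fin 2) (Fin 2) F | (M.det = 0 ∧ conjPolarDet σ M = 0) ∧ M 0 0 ≠ 0} =
      (Fintype.card F - 1) * #{x : F × F | σ x.1 = x.1 ∨ σ x.2 = x.2} := by
  rw [← card_univ (α := F), ← card_erase_of_mem (mem_univ 0), ← card_product]
  refine card_nbij' (fun M => (M 0 0, M 0 1 / M 0 0, M 1 0 / M 0 0))
    (fun x => rankOne x.1 x.2.1 x.2.2) ?_ ?_ ?_ ?_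
  · intro M hM
    simp only [coe_filter, mem_univ, true_and, Set.mem_ofPred_eq] at hM
    obtain ⟨⟨hdet, hσ⟩, h⟩ := hM
    rw [← rankOne_eq_of_det_eq_zero hdet h, conjPolarDet_rankOne] at hσ
    simpa [h, sub_eq_zero] using hσ
  · rintro ⟨a, x, y⟩ h
    have hcorner : rankOne a x y 0 0 = a := rfl
    simp_all [det_rankOne, conjPolarDet_rankOne, sub_eq_zero]
  · intro M hM
    simp only [coe_filter, mem_univ, true_and, Set.mem_ofPred_eq] at hM
    exact rankOne_eq_of_det_eq_zero hM.1.1 hM.2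
  · rintro ⟨a, x, y⟩ h
    have ha : a ≠ 0 := by simp_all
    simp [rankOne, ha]

theorem card_det_conjPolarDet :
    (#{M : Matrix (Fin 2) (Fin 2) F | M.det = 0 ∧ conjPolarDet σ M = 0} : ℤ) =
      ((#{x | σ x = x} : ℤ) + 1) * (Fintype.card F - 1) *
        (2 * Fintype.card F - #{x | σ x = x} + 1) + 1 := by
  rw [← card_filter_add_card_filter_not fun M : Matrix (Fin 2) (Fin 2) F => M 0 0 = 0,
    filter_filter, filter_filter, card_det_conjPolarDet_of_apply_eq_zero,
    card_det_conjPolarDet_of_apply_ne_zero, Nat.cast_add, Nat.cast_mul, Nat.cast_mul,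
    card_filter_fst_or_snd (· = (0 : F)), card_filter_fst_or_snd (fun x => σ x = x),
    Nat.cast_sub Fintype.card_pos, filter_eq' univ (0 : F), if_pos (mem_univ 0), card_singleton]
  push_cast
  ring

theorem card_forall_sum_mul_iterate_eq_zero (h2 : (2 : F) ≠ 0) {n : ℕ} (hn : 2 ≤ n) :
    (#{v : Fin 4 → F | ∀ i : Fin n, ∑ j, v j * σ^[i] (v j) = 0} : ℤ) =
      ((#{x | σ x = x} : ℤ) + 1) * (Fintype.card F - 1) *
        (2 * Fintype.card F - #{x | σ x = x} + 1) + 1 := by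
  obtain ⟨p, hp⟩ := CharP.exists F
  have : NeZero p := ⟨CharP.char_ne_zero_of_finite F p⟩
  obtain ⟨s, t, hst⟩ := CharP.sq_add_sq F p (-1)
  rw [Int.cast_neg, Int.cast_one] at hst
  rw [← card_det_conjPolarDet]
  congr 1
  refine card_equiv (fourSquaresEquiv h2 hst) fun v => ?_
  rw [mem_filter_univ, mem_filter_univ,
    forall_sum_mul_iterate_eq_zero_iff h2 hst (map_natCast σ s) (map_natCast σ t) hn]

variable (F) in
theorem card_frobenius_eq_self (p : ℕ) [Fact p.Prime] [CharP F p] :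
    #{x | frobenius F p x = x} = p := by
  rw [← Fintype.card_subtype, Fintype.card_eq_nat_card]
  simp_rw [frobenius_def, ← Subfield.mem_bot_iff_pow_eq_self F p]
  exact Subfield.card_bot F p

end Count

section FourthMoment

variable {F R : Type*} [Field F] [Fintype F] [CommRing R] [IsDomain R] {ψ : AddChar F R}

theorem sum_sum_addChar_mul_iterate_pow_four [DecidableEq F] (hψ : ψ.IsPrimitive) (h2 : (2 : F) ≠ 0)
    (σ : F →+* F) {n : ℕ} (hn : 2 ≤ n) :
    ∑ t : Fin n → F, (∑ x, ψ (∑ i, t i * (x * σ^[i] x))) ^ 4 =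
      (Fintype.card F : R) ^ n *
        (((#{x | σ x = x} : R) + 1) * (Fintype.card F - 1) *
          (2 * Fintype.card F - #{x | σ x = x} + 1) + 1) := by
  have hcount := congrArg (Int.cast (R := R)) (card_forall_sum_mul_iterate_eq_zero σ h2 hn)
  push_cast at hcount
  rw [sum_sum_addChar_pow hψ, Fintype.card_fin, ← hcount]
  congr!

theorem sum_sum_addChar_pow_frobenius_pow_four (hψ : ψ.IsPrimitive) (p : ℕ) [Fact p.Prime]
    [CharP F p] (hp : p ≠ 2) {n : ℕ} (hn : 2 ≤ n) :
    ∑ t : Fin n → F, (∑ x, ψ (∑ i, t i * x ^ (p ^ (i : ℕ) + 1))) ^ 4 =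
      (Fintype.card F : R) ^ n *
        ((p + 1) * (Fintype.card F - 1) * (2 * Fintype.card F - p + 1) + 1) := by
  classical
  have h2 : (2 : F) ≠ 0 := Ring.two_ne_zero (by rwa [ringChar.eq F p])
  have h := sum_sum_addChar_mul_iterate_pow_four hψ h2 (frobenius F p) hn
  rw [card_frobenius_eq_self F p] at h
  simpa only [iterate_frobenius, ← pow_succ'] using h

end FourthMoment

theorem sum_S_fourth_moment_general (p m : ℕ) [Fact p.Prime] (hp : p ≠ 2) (hm : 0 < m) :
    letI : Fintype (GaloisField p m) := Fintype.ofFinite _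
    ∑ t : GaloisField p m × GaloisField p m × GaloisField p m,
      (expSum p m t.1 t.2.1 t.2.2) ^ 4 =
        (((p : ℂ) + 1) * ((p : ℂ) ^ m - 1) * (2 * (p : ℂ) ^ m - p + 1) + 1) *
          (p : ℂ) ^ (3 * m) := by
  let : Fintype (GaloisField p m) := Fintype.ofFinite _
  have hcard : Fintype.card (GaloisField p m) = p ^ m := by
    rw [← Nat.card_eq_fintype_card, GaloisField.card p m hm.ne']
  rw [sum_prod_prod_eq_sum_fin_three fun α β γ => expSum p m α β γ ^ 4]
  simp_rw [expSum_eq_sum_traceChar]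
  have h := sum_sum_addChar_pow_frobenius_pow_four
    (traceChar_isPrimitive p (GaloisField p m)) p hp (Nat.le_succ 2)
  simp only [Fin.sum_univ_three, Fin.val_zero, Fin.val_one, Fin.val_two, pow_zero, pow_one, hcard,
    Nat.cast_pow] at h
  rw [h]
  ring

theorem sum_S_fourth_moment (m : ℕ) (hm : 0 < m) :
    letI : Fact (Nat.Prime 3) := ⟨by norm_num⟩
    letI : Fintype (GaloisField 3 m) := Fintype.ofFinite _
    ∑ t : GaloisField 3 m × GaloisField 3 m × GaloisField 3 m,
      (expSum 3 m t.1 t.2.1 t.2.2) ^ 4 =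
        (8 * ((3 : ℂ) ^ m - 1) ^ 2 + 1) * (3 : ℂ) ^ (3 * m) := by
  convert sum_S_fourth_moment_general 3 m (by norm_num) hm using 1
  push_cast
  ring
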